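/- arXiv:2312.08842 — 2 statements merged into one kernel-verified Lean document; each statement's English description precedes it below -/
import Mathlib

section
/- Let n ≥ 1, let z₁ = 0, z₂,…,z_n ∈ ℂ∖{0} be pairwise distinct, and let m₁,…,m_n, l, n₀, n₁ ∈ ℂ; set l₁ = l and l_a = 0 for a ≥ 2. Let s₁,…,s_{d₀} be pairwise distinct, t₁,…,t_{d₁} be pairwise distinct, all s_i, t_j distinct from each other, from 0, and from all z_a, satisfying: for each i, ∑_a m_a/(s_i−z_a) + ∑_j 1/(s_i−t_j) − ∑_{j≠i} 1/(s_i−s_j) + n₀ = 0, and for each i, l/t_i + ∑_j 1/(t_i−s_j) − ∑_{j≠i} 1/(t_i−t_j) + n₁ = 0. Define a₋(x) = −( n₁ + l/x + ∑_i 1/(x−s_i) − ∑_j 1/(x−t_j) ), r = d₀ − d₁, and p_i = 2(n₀+n₁) + (2m₁+2l)/s_i + ∑_{a=2}^{n} 2m_a/(s_i−z_a). Then for every x ∈ ℂ distinct from 0 and from all s_i, t_j, z_a: a₋(x)² + a₋′(x) = n₁² + l(l+1)/x² + 2n₁(l+r)/x + ∑_i 2/(x−s_i)² + ∑_i s_i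 p_i/( x (x−s_i) ). In particular the right-hand side is independent of the t_j. -/
open Finset

/-!
Let `f x = k + ∑ i, c i / (x - u i)` have simple poles. Partial fractions give
`f² - f′ = k² + ∑ i, c i (c i + 1) / (x - u i)² + ∑ i, 2 (c i) f_i / (x - u i)`,
where `f_i` is the constant term of `f` at `u i`, and antisymmetry of `1 / (u i - u j)` gives
`∑ i, c i * f_i = k * ∑ i, c i`.

For `f = -a₋` the poles are `0`, `s i`, `t j`, with residues `l`, `1`, `-1`. The residue `-1` kills
the double pole at `t j`, while the Bethe equations say that the constant term of `f` vanishes at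
`t j` and equals `p i / 2` at `s i`. The second identity then determines the residue of `f²` at `0`.
-/

section PartialFractions

theorem sum_erase_one_div_sub {K ι : Type*} [Field K] [DecidableEq ι] (S : Finset ι) (u : ι → K)
    (i : ι) : ∑ j ∈ S.erase i, 1 / (u i - u j) = ∑ j ∈ S, 1 / (u i - u j) :=
  sum_erase S (by rw [sub_self, div_zero])

theorem div_sub_mul_div_sub {K : Type*} [Field K] {a b y z x : K} (hyz : y ≠ z) (hxy : x ≠ y)
    (hxz : x ≠ z) :
    a / (x - y) * (b / (x - z)) =
      a / (x - y) * (b / (y - z)) + b / (x - z) * (a / (z - y)) := by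
  have := sub_ne_zero.mpr hyz
  have := sub_ne_zero.mpr hxy
  have := sub_ne_zero.mpr hxz
  rw [← neg_sub y z]
  field_simp
  ring

variable {K ι : Type*} [Field K] [Fintype ι] (k : K) (c u : ι → K)

/-- The rational function `k + ∑ i, c i / (x - u i)` with simple poles. Since `a / 0 = 0`, its value
at a pole `u i` (for injective `u`) is the constant term of its Laurent expansion there. -/
def simplePoleSum (x : K) : K :=
  k + ∑ i, c i / (x - u i)

theorem sum_mul_sum_div_sub_eq_zero : ∑ i, c i * ∑ j, c j / (u i - u j) = 0 := by
  simp only [mul_sum, ← Fintype.sum_prod_type']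
  refine sum_involution (fun q _ ↦ q.swap) (fun q _ ↦ ?_) (fun q _ hq hswap ↦ hq ?_)
    (fun _ _ ↦ mem_univ _) (fun q _ ↦ q.swap_swap)
  · rw [Prod.fst_swap, Prod.snd_swap, ← neg_sub (u q.1), div_neg]
    ring
  · rw [← congrArg Prod.fst hswap, Prod.fst_swap, sub_self, div_zero, mul_zero]

theorem sum_mul_simplePoleSum_pole :
    ∑ i, c i * simplePoleSum k c u (u i) = k * ∑ i, c i := by
  simp only [simplePoleSum, mul_add, sum_add_distrib]
  rw [sum_mul_sum_div_sub_eq_zero, add_zero, ← sum_mul, mul_comm]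

variable {u} {x : K}

theorem sq_sum_div_sub (hu : Function.Injective u) (hx : ∀ i, x ≠ u i) :
    (∑ i, c i / (x - u i)) ^ 2 =
      ∑ i, (c i / (x - u i)) ^ 2 + 2 * ∑ i, c i / (x - u i) * ∑ j, c j / (u i - u j) := by
  classical
  have pair (i j : ι) : c i / (x - u i) * (c j / (x - u j)) =
      (if i = j then (c i / (x - u i)) ^ 2 else 0) + c i / (x - u i) * (c j / (u i - u j)) +
        c j / (x - u j) * (c i / (u j - u i)) := by
    split_ifs with hij
    · simp [hij, sq]
    · rw [zero_add, div_sub_mul_div_sub (hu.ne hij) (hx i) (hx j)]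
  calc (∑ i, c i / (x - u i)) ^ 2
      = ∑ i, ∑ j, c i / (x - u i) * (c j / (x - u j)) := by rw [sq, sum_mul_sum]
    _ = ∑ i, (c i / (x - u i)) ^ 2 + ∑ i, ∑ j, c i / (x - u i) * (c j / (u i - u j)) +
          ∑ i, ∑ j, c j / (x - u j) * (c i / (u j - u i)) := by
        simp only [pair, sum_add_distrib, sum_ite_eq, mem_univ, if_true]
    _ = ∑ i, (c i / (x - u i)) ^ 2 + 2 * ∑ i, c i / (x - u i) * ∑ j, c j / (u i - u j) := by
        rw [sum_comm (f := fun i j ↦ c j / (x - u j) * (c i / (u j - u i))), add_assoc, ← two_mul]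
        simp only [mul_sum]

theorem simplePoleSum_sq (hu : Function.Injective u) (hx : ∀ i, x ≠ u i) :
    simplePoleSum k c u x ^ 2 =
      k ^ 2 + ∑ i, (c i / (x - u i)) ^ 2 +
        ∑ i, 2 * c i * simplePoleSum k c u (u i) / (x - u i) := by
  have simple_poles : ∑ i, 2 * c i * simplePoleSum k c u (u i) / (x - u i) =
      2 * k * ∑ i, c i / (x - u i) +
        2 * ∑ i, c i / (x - u i) * ∑ j, c j / (u i - u j) := by
    rw [mul_sum, mul_sum, ← sum_add_distrib]
    refine sum_congr rfl fun i _ ↦ ?_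
    rw [simplePoleSum]
    ring
  rw [simple_poles, simplePoleSum, add_sq, sq_sum_div_sub c hu hx]
  ring

end PartialFractions

section Derivative

variable {𝕜 ι : Type*} [NontriviallyNormedField 𝕜] [Fintype ι] (k : 𝕜) (c : ι → 𝕜) {u : ι → 𝕜}
  {x : 𝕜}

theorem hasDerivAt_simplePoleSum (hx : ∀ i, x ≠ u i) :
    HasDerivAt (simplePoleSum k c u) (-∑ i, c i / (x - u i) ^ 2) x := by
  rw [← sum_neg_distrib]
  refine (HasDerivAt.fun_sum fun i _ ↦ ?_).const_add k
  simpa [neg_div] using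
    (hasDerivAt_const x (c i)).fun_div ((hasDerivAt_id x).sub_const (u i)) (sub_ne_zero.mpr (hx i))

theorem simplePoleSum_sq_sub_deriv (hu : Function.Injective u) (hx : ∀ i, x ≠ u i) :
    simplePoleSum k c u x ^ 2 - deriv (simplePoleSum k c u) x =
      k ^ 2 + ∑ i, c i * (c i + 1) / (x - u i) ^ 2 +
        ∑ i, 2 * c i * simplePoleSum k c u (u i) / (x - u i) := by
  have double_poles : ∑ i, c i * (c i + 1) / (x - u i) ^ 2 =
      ∑ i, (c i / (x - u i)) ^ 2 + ∑ i, c i / (x - u i) ^ 2 := by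
    rw [← sum_add_distrib]
    exact sum_congr rfl fun i _ ↦ by rw [div_pow]; ring
  rw [simplePoleSum_sq k c hu hx, (hasDerivAt_simplePoleSum k c hx).deriv, double_poles]
  ring

end Derivative

section Superpotential

variable {K ι κ : Type*} [Field K]

/-- The poles `0`, `s i`, `t j` of `a₋`. -/
def gaudinPole (s : ι → K) (t : κ → K) : Option (ι ⊕ κ) → K
  | none => 0
  | some (.inl i) => s i
  | some (.inr j) => t j

/-- The residues `l`, `1`, `-1` of `-a₋` at its poles `0`, `s i`, `t j`. -/
def gaudinResidue (l : K) : Option (ι ⊕ κ) → K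
  | none => l
  | some (.inl _) => 1
  | some (.inr _) => -1

theorem gaudinPole_injective {s : ι → K} {t : κ → K} (hs : Function.Injective s)
    (ht : Function.Injective t) (hst : ∀ i j, s i ≠ t j) (hs0 : ∀ i, s i ≠ 0)
    (ht0 : ∀ j, t j ≠ 0) : Function.Injective (gaudinPole s t) := by
  refine Option.injective_iff.mpr ⟨?_, ?_⟩
  · convert hs.sumElim ht hst using 1
    ext (i | j) <;> rfl
  · rintro ⟨i | j, h⟩
    exacts [hs0 i h, ht0 j h]

variable [Fintype ι] [Fintype κ]

/-- The function `-a₋ = n₁ + l / x + ∑ i, 1 / (x - s i) - ∑ j, 1 / (x - t j)`, written as a sum of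
simple poles so that its values at the `s i` and `t j` are its constant terms there. -/
def gaudinSuperpotential (n₁ l : K) (s : ι → K) (t : κ → K) : K → K :=
  simplePoleSum n₁ (gaudinResidue l) (gaudinPole s t)

variable {n₁ l : K} {s : ι → K} {t : κ → K}

theorem gaudinSuperpotential_apply (x : K) :
    gaudinSuperpotential n₁ l s t x =
      n₁ + l / x + ∑ i, 1 / (x - s i) - ∑ j, 1 / (x - t j) := by
  simp only [gaudinSuperpotential, simplePoleSum, gaudinPole, gaudinResidue, Fintype.sum_option,
    Fintype.sum_sum_type, sub_zero, neg_div, sum_neg_distrib]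
  ring

theorem gaudinSuperpotential_apply_left [DecidableEq ι] (i : ι) :
    gaudinSuperpotential n₁ l s t (s i) =
      n₁ + l / s i + ∑ j ∈ univ.erase i, 1 / (s i - s j) - ∑ j, 1 / (s i - t j) := by
  rw [gaudinSuperpotential_apply, sum_erase_one_div_sub]

theorem gaudinSuperpotential_apply_right [DecidableEq κ] (j : κ) :
    gaudinSuperpotential n₁ l s t (t j) =
      n₁ + l / t j + ∑ i, 1 / (t j - s i) - ∑ i ∈ univ.erase j, 1 / (t j - t i) := by
  rw [gaudinSuperpotential_apply, sum_erase_one_div_sub]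

-- The summation identity `2 l ((log y₁)′ - (log y₀)′)(0) = ∑ i, p i - 2 n₁ r`, with `p i` written
-- as twice the constant term at `s i`.
theorem mul_gaudinSuperpotential_zero (ht : ∀ j, gaudinSuperpotential n₁ l s t (t j) = 0) :
    l * gaudinSuperpotential n₁ l s t 0 =
      n₁ * (l + (Fintype.card ι - Fintype.card κ)) -
        ∑ i, gaudinSuperpotential n₁ l s t (s i) := by
  have residue_sum := sum_mul_simplePoleSum_pole n₁ (gaudinResidue l) (gaudinPole s t)
  simp only [← gaudinSuperpotential.eq_def, gaudinPole, gaudinResidue, Fintype.sum_option,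
    Fintype.sum_sum_type, ht, one_mul, mul_zero, sum_const, card_univ, nsmul_eq_mul, mul_one,
    mul_neg, add_zero] at residue_sum
  linear_combination residue_sum

end Superpotential

section Potential

variable {𝕜 ι κ : Type*} [NontriviallyNormedField 𝕜] [Fintype ι] [Fintype κ]

theorem gaudinSuperpotential_sq_sub_deriv {n₁ l x : 𝕜} {s : ι → 𝕜} {t : κ → 𝕜}
    (hs : Function.Injective s) (ht : Function.Injective t) (hst : ∀ i j, s i ≠ t j)
    (hs0 : ∀ i, s i ≠ 0) (ht0 : ∀ j, t j ≠ 0)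
    (bethe_t : ∀ j, gaudinSuperpotential n₁ l s t (t j) = 0)
    (hx0 : x ≠ 0) (hxs : ∀ i, x ≠ s i) (hxt : ∀ j, x ≠ t j) :
    gaudinSuperpotential n₁ l s t x ^ 2 - deriv (gaudinSuperpotential n₁ l s t) x =
      n₁ ^ 2 + l * (l + 1) / x ^ 2 + 2 * n₁ * (l + (Fintype.card ι - Fintype.card κ)) / x +
        ∑ i, 2 / (x - s i) ^ 2 +
        ∑ i, s i * (2 * gaudinSuperpotential n₁ l s t (s i)) / (x * (x - s i)) := by
  set W := gaudinSuperpotential n₁ l s t with W_def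
  have hx : ∀ q, x ≠ gaudinPole s t q := by
    rintro (_ | i | j)
    exacts [hx0, hxs i, hxt j]
  have expansion : W x ^ 2 - deriv W x = n₁ ^ 2 + l * (l + 1) / x ^ 2 + 2 * (l * W 0) / x +
      ∑ i, 2 / (x - s i) ^ 2 + ∑ i, 2 * W (s i) / (x - s i) := by
    have partial_fractions := simplePoleSum_sq_sub_deriv n₁ (gaudinResidue l)
      (gaudinPole_injective hs ht hst hs0 ht0) hx
    simp only [← gaudinSuperpotential.eq_def, ← W_def, gaudinPole, gaudinResidue,
      Fintype.sum_option, Fintype.sum_sum_type, bethe_t, sub_zero, neg_add_cancel, mul_zero,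
      zero_div, sum_const_zero, mul_one, one_mul, one_add_one_eq_two] at partial_fractions
    linear_combination partial_fractions
  have shifted_poles : ∑ i, s i * (2 * W (s i)) / (x * (x - s i)) =
      ∑ i, 2 * W (s i) / (x - s i) - 2 * (∑ i, W (s i)) / x := by
    rw [mul_sum, sum_div, ← sum_sub_distrib]
    refine sum_congr rfl fun i _ ↦ ?_
    have := sub_ne_zero.mpr (hxs i)
    field_simp
    ring
  rw [expansion, shifted_poles, mul_gaudinSuperpotential_zero bethe_t]
  ring

theorem exp_gaudin_L1_potential_special_general {α : Type*} [Fintype α] [DecidableEq α]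
    [DecidableEq ι] [DecidableEq κ] (z m : α → 𝕜) (a₀ : α) (hz : z a₀ = 0) (l n₀ n₁ : 𝕜)
    (s : ι → 𝕜) (t : κ → 𝕜) (hs : Function.Injective s) (ht : Function.Injective t)
    (hst : ∀ i j, s i ≠ t j) (ht0 : ∀ j, t j ≠ 0) (hsz : ∀ i a, s i ≠ z a)
    (bethe_s : ∀ i, ∑ a, m a / (s i - z a) + ∑ j, 1 / (s i - t j)
      - ∑ j ∈ univ.erase i, 1 / (s i - s j) + n₀ = 0)
    (bethe_t : ∀ i, l / t i + ∑ j, 1 / (t i - s j)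
      - ∑ j ∈ univ.erase i, 1 / (t i - t j) + n₁ = 0)
    (aminus : 𝕜 → 𝕜)
    (haminus : ∀ x, aminus x = -(n₁ + l / x + ∑ i, 1 / (x - s i) - ∑ j, 1 / (x - t j)))
    (r : 𝕜) (hr : r = Fintype.card ι - Fintype.card κ) (p : ι → 𝕜)
    (hp : ∀ i, p i = 2 * (n₀ + n₁) + (2 * m a₀ + 2 * l) / s i
      + ∑ a ∈ univ.erase a₀, 2 * m a / (s i - z a))
    (x : 𝕜) (hx0 : x ≠ 0) (hxs : ∀ i, x ≠ s i) (hxt : ∀ j, x ≠ t j) :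
    aminus x ^ 2 + deriv aminus x =
      n₁ ^ 2 + l * (l + 1) / x ^ 2 + 2 * n₁ * (l + r) / x + ∑ i, 2 / (x - s i) ^ 2
        + ∑ i, s i * p i / (x * (x - s i)) := by
  have hs0 (i : ι) : s i ≠ 0 := hz ▸ hsz i a₀
  have aminus_eq : aminus = -gaudinSuperpotential n₁ l s t :=
    funext fun x ↦ by rw [haminus, Pi.neg_apply, gaudinSuperpotential_apply]
  have constant_term_t (j : κ) : gaudinSuperpotential n₁ l s t (t j) = 0 := by
    rw [gaudinSuperpotential_apply_right]
    linear_combination bethe_t j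
  have constant_term_s (i : ι) : 2 * gaudinSuperpotential n₁ l s t (s i) = p i := by
    have bethe := bethe_s i
    rw [← add_sum_erase _ _ (mem_univ a₀), hz, sub_zero] at bethe
    simp only [hp, gaudinSuperpotential_apply_left, mul_div_assoc, ← mul_sum]
    linear_combination -2 * bethe
  have potential := gaudinSuperpotential_sq_sub_deriv hs ht hst hs0 ht0 constant_term_t hx0 hxs hxt
  simp only [constant_term_s, ← hr] at potential
  rw [← potential, aminus_eq, deriv.neg, Pi.neg_apply, neg_sq, sub_eq_add_neg]

end Potential

/-- Corollary on the special case `T₁ = e^{2n₁x} x^{2l}`: the potential `a₋² + a₋'` of the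
operator `L₁` built from a solution of the exponential Gaudin Bethe Ansatz equations depends
only on the `s i` and the parameters (the `t j` disappear). Here `z ⟨0⟩ = 0`, `l₁ = l`,
`l_a = 0` for `a ≥ 2`, `r = d₀ - d₁`, and
`p i = 2(n₀+n₁) + (2m₁+2l)/s i + ∑_{a≥2} 2 m_a/(s i - z a)`. -/
theorem exp_gaudin_L1_potential_special (n : ℕ) (hn : 0 < n)
    (z : Fin n → ℂ) (hz_inj : Function.Injective z)
    (hz1 : z ⟨0, hn⟩ = 0) (hz_ne : ∀ a : Fin n, a ≠ ⟨0, hn⟩ → z a ≠ 0)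
    (m : Fin n → ℂ) (l n₀ n₁ : ℂ) (d₀ d₁ : ℕ)
    (s : Fin d₀ → ℂ) (t : Fin d₁ → ℂ)
    (hs_inj : Function.Injective s) (ht_inj : Function.Injective t)
    (hst : ∀ i j, s i ≠ t j)
    (hs0 : ∀ i, s i ≠ 0) (ht0 : ∀ j, t j ≠ 0)
    (hsz : ∀ i a, s i ≠ z a) (htz : ∀ j a, t j ≠ z a)
    (hBAE1 : ∀ i, ∑ a, m a / (s i - z a) + ∑ j, 1 / (s i - t j)
      - ∑ j ∈ univ.erase i, 1 / (s i - s j) + n₀ = 0)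
    (hBAE2 : ∀ i, l / t i + ∑ j, 1 / (t i - s j)
      - ∑ j ∈ univ.erase i, 1 / (t i - t j) + n₁ = 0)
    (aminus : ℂ → ℂ)
    (haminus : ∀ x, aminus x
      = -(n₁ + l / x + ∑ i, 1 / (x - s i) - ∑ j, 1 / (x - t j)))
    (r : ℂ) (hr : r = (d₀ : ℂ) - (d₁ : ℂ))
    (p : Fin d₀ → ℂ)
    (hp : ∀ i, p i = 2 * (n₀ + n₁) + (2 * m ⟨0, hn⟩ + 2 * l) / s i
      + ∑ a ∈ univ.erase ⟨0, hn⟩, 2 * m a / (s i - z a)) :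
    ∀ x : ℂ, x ≠ 0 → (∀ a, x ≠ z a) → (∀ i, x ≠ s i) → (∀ j, x ≠ t j) →
      (aminus x) ^ 2 + deriv aminus x
        = n₁ ^ 2 + l * (l + 1) / x ^ 2 + 2 * n₁ * (l + r) / x
          + ∑ i, 2 / (x - s i) ^ 2
          + ∑ i, s i * p i / (x * (x - s i)) := by
  intro x hx0 _ hxs hxt
  exact exp_gaudin_L1_potential_special_general z m ⟨0, hn⟩ hz1 l n₀ n₁ s t hs_inj
    ht_inj hst ht0 hsz hBAE1 hBAE2 aminus haminus r (by simpa using hr) p hp x hx0 hxs hxt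
end

section
/- Let q, γ ∈ ℂ∖{0} and let Q₊, Q₋ : ℂ∖{0} → ℂ satisfy the QQ-system γ·Q₊(qλ)·Q₋(q⁻¹λ) − γ⁻¹·Q₊(q⁻¹λ)·Q₋(qλ) = 1 for every λ ∈ ℂ∖{0}. For every integer j define T_{j−1}(λ) = γ^{j}·Q₊(q^{j}λ)·Q₋(q^{−j}λ) − γ^{−j}·Q₊(q^{−j}λ)·Q₋(q^{j}λ). Then the fusion relations hold: for every integer j and every λ ∈ ℂ∖{0}, T₁(λ)·T_j(q^{j+1}λ) = T_{j−1}(q^{j+2}λ) + T_{j+1}(q^{j}λ). -/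
/-!
Along the orbit `k ↦ q^(2k) λ`, the twisted values `u k = γ^k Q₊(q^(2k) λ)` and
`v k = γ^(-k) Q₋(q^(2k) λ)` absorb all powers of `γ`: the minor `u m * v n - u n * v m` equals
`T_{m-n-1}(q^(m+n) λ)`. The `QQ`-system says that the minors of adjacent columns equal `1`, so the
fusion relation is the three-term Plücker relation for the columns `j + 1, 1, 0, -1`.
-/

section Minor

variable {ι R : Type*} [CommRing R]

/-- The `2 × 2` minor, on columns `m` and `n`, of the matrix with rows `u` and `v`: a discrete
analogue of the Wronskian, and the Plücker coordinate through which every `T_j` is expressed. -/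
def columnMinor (u v : ι → R) (m n : ι) : R :=
  u m * v n - u n * v m

theorem columnMinor_plucker (u v : ι → R) (a b c d : ι) :
    columnMinor u v b d * columnMinor u v a c =
      columnMinor u v a b * columnMinor u v c d + columnMinor u v a d * columnMinor u v b c := by
  unfold columnMinor
  ring

end Minor

section QuantumWronskian

variable {G X R : Type*} [Group G] [MulAction G X] [CommRing R]

/-- The quantum Wronskian of `Qp` and `Qm` with shift `q ^ j` and twist `γ ^ j`. The paper's
`T_{j-1}` is the case of multiplication by `q` on `ℂ`, and the `QQ`-system says that the quantum
Wronskian with `j = 1` equals `1`. -/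
def quantumWronskian (γ : Rˣ) (q : G) (Qp Qm : X → R) (j : ℤ) (x : X) : R :=
  ↑(γ ^ j) * Qp (q ^ j • x) * Qm (q ^ (-j) • x)
    - ↑(γ ^ (-j)) * Qp (q ^ (-j) • x) * Qm (q ^ j • x)

/-- The values of `Q` along the orbit of `x` under `q ^ 2`, weighted by powers of `γ`. Only even
powers of `q` occur, so that no square root of `γ` is needed. -/
def twistedOrbit (γ : Rˣ) (q : G) (Q : X → R) (x : X) (k : ℤ) : R :=
  ↑(γ ^ k) * Q (q ^ (2 * k) • x)

theorem columnMinor_twistedOrbit (γ : Rˣ) (q : G) (Qp Qm : X → R) (x : X) (m n : ℤ) :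
    columnMinor (twistedOrbit γ q Qp x) (twistedOrbit γ⁻¹ q Qm x) m n =
      quantumWronskian γ q Qp Qm (m - n) (q ^ (m + n) • x) := by
  have shift_left : q ^ (m - n) • q ^ (m + n) • x = q ^ (2 * m) • x := by
    rw [smul_smul, ← zpow_add]
    congr 2
    ring
  have shift_right : q ^ (-(m - n)) • q ^ (m + n) • x = q ^ (2 * n) • x := by
    rw [smul_smul, ← zpow_add]
    congr 2
    ring
  have twist (k l : ℤ) : (↑(γ ^ (k - l)) : R) = ↑(γ ^ k) * ↑(γ⁻¹ ^ l) := by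
    rw [zpow_sub, inv_zpow, Units.val_mul]
  unfold columnMinor twistedOrbit quantumWronskian
  rw [shift_left, shift_right, neg_sub, twist m n, twist n m]
  ring

theorem fusion_relations_general {γ : Rˣ} {q : G} {Qp Qm : X → R} {T : ℤ → X → R}
    (hT : ∀ j x, T (j - 1) x = quantumWronskian γ q Qp Qm j x) {x : X}
    (hT_zero : T 0 (q • x) = 1) (hT_zero_inv : T 0 (q⁻¹ • x) = 1) (j : ℤ) :
    T 1 x * T j (q ^ (j + 1) • x) = T (j - 1) (q ^ (j + 2) • x) + T (j + 1) (q ^ j • x) := by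
  have minor_eq (m n k l : ℤ) (hk : m - n - 1 = k) (hl : m + n = l) :
      columnMinor (twistedOrbit γ q Qp x) (twistedOrbit γ⁻¹ q Qm x) m n = T k (q ^ l • x) := by
    rw [columnMinor_twistedOrbit, ← hT, hk, hl]
  have plucker := columnMinor_plucker
    (twistedOrbit γ q Qp x) (twistedOrbit γ⁻¹ q Qm x) (j + 1) 1 0 (-1)
  rwa [minor_eq 1 (-1) 1 0 (by ring) (by ring),
    minor_eq (j + 1) 0 j (j + 1) (by ring) (by ring),
    minor_eq (j + 1) 1 (j - 1) (j + 2) (by ring) (by ring),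
    minor_eq 0 (-1) 0 (-1) (by ring) (by ring),
    minor_eq (j + 1) (-1) (j + 1) j (by ring) (by ring),
    minor_eq 1 0 0 1 (by ring) (by ring),
    zpow_zero, one_smul, zpow_one, zpow_neg_one, hT_zero, hT_zero_inv, mul_one, mul_one]
    at plucker

end QuantumWronskian

/-- The fusion relations: if `Q₊, Q₋` satisfy the `QQ`-system on `ℂ∖{0}` and the functions
`T_j` are defined by `T_{j−1}(λ) = γ^j Q₊(q^jλ) Q₋(q^{−j}λ) − γ^{−j} Q₊(q^{−j}λ) Q₋(q^{j}λ)`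
for `j ∈ ℤ`, then `T₁(λ) T_j(q^{j+1}λ) = T_{j−1}(q^{j+2}λ) + T_{j+1}(q^{j}λ)`. -/
theorem fusion_relations (q γ : ℂ) (hq : q ≠ 0) (hγ : γ ≠ 0)
    (Qp Qm : ℂ → ℂ)
    (hQQ : ∀ lam : ℂ, lam ≠ 0 →
      γ * Qp (q * lam) * Qm (q⁻¹ * lam) - γ⁻¹ * Qp (q⁻¹ * lam) * Qm (q * lam) = 1)
    (T : ℤ → ℂ → ℂ)
    (hT : ∀ j : ℤ, ∀ lam : ℂ, T (j - 1) lam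
      = γ ^ j * Qp (q ^ j * lam) * Qm (q ^ (-j) * lam)
        - γ ^ (-j) * Qp (q ^ (-j) * lam) * Qm (q ^ j * lam)) :
    ∀ j : ℤ, ∀ lam : ℂ, lam ≠ 0 →
      T 1 lam * T j (q ^ (j + 1) * lam)
        = T (j - 1) (q ^ (j + 2) * lam) + T (j + 1) (q ^ j * lam) := by
  intro j lam hlam
  have hT_zero (x : ℂ) (hx : x ≠ 0) : T 0 x = 1 := by
    simpa using (hT 1 x).trans (by simpa using hQQ x hx)
  simpa [Units.smul_def] using fusion_relations_general (γ := Units.mk0 γ hγ) (q := Units.mk0 q hq)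
    (by simpa [quantumWronskian, Units.smul_def] using hT)
    (hT_zero (q * lam) (by positivity)) (hT_zero (q⁻¹ * lam) (by positivity)) j
end
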